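/- For n > 2, the number C_n(123,231) of cyclic permutations of length n avoiding both patterns 123 and 231 equals: φ(n/2) if n ≡ 0 mod 4; φ((n+2)/4) + φ(n/2) if n ≡ 2 mod 4; and φ((n+1)/2) if n is odd, where φ is Euler's totient function. -/

import Mathlib

/-- A permutation of {1,...,n} is cyclic (a single n-cycle) iff it acts transitively. -/
def IsCyclicPerm {n : ℕ} (p : Equiv.Perm (Fin n)) : Prop :=
  ∀ x y : Fin n, ∃ m : ℕ, (p ^ m) x = y

/-- `p` contains the pattern `q` (given as a word `q 0, q 1, ...`). -/
def Contains {n k : ℕ} (p : Equiv.Perm (Fin n)) (q : Fin k → Fin k) : Prop :=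
  ∃ f : Fin k → Fin n, StrictMono f ∧ ∀ i j : Fin k, q i < q j ↔ p (f i) < p (f j)

def Avoids {n k : ℕ} (p : Equiv.Perm (Fin n)) (q : Fin k → Fin k) : Prop :=
  ¬ Contains p q

def pat123 : Fin 3 → Fin 3 := ![0, 1, 2]
def pat231 : Fin 3 → Fin 3 := ![1, 2, 0]
def pat132 : Fin 3 → Fin 3 := ![0, 2, 1]
def pat321 : Fin 3 → Fin 3 := ![2, 1, 0]
def pat312 : Fin 3 → Fin 3 := ![2, 0, 1]

/-- `p` is the three-layer permutation of the triple `(a,b,c)`, in 0-based form: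
`p_i = n+1-i` for `1 ≤ i ≤ a`, `p_i = a+b+1-i` for `a+1 ≤ i ≤ a+b`,
`p_i = n+b+1-i` for `a+b+1 ≤ i ≤ n` (1-based). -/
def IsTriplePerm (n a b : ℕ) (p : Equiv.Perm (Fin n)) : Prop :=
  ∀ i : Fin n, (p i : ℕ) =
    if (i : ℕ) < a then n - 1 - (i : ℕ)
    else if (i : ℕ) < a + b then a + b - 1 - (i : ℕ)
    else n + b - 1 - (i : ℕ)

namespace Cyc

/-- closed sets of a cyclic permutation are everything -/
lemma closed_univ {n : ℕ} {p : Equiv.Perm (Fin n)} (hp : IsCyclicPerm p) (S : Fin n → Prop)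
    (hS : ∀ x, S x → S (p x)) (x : Fin n) (hx : S x) (y : Fin n) : S y := by
  obtain ⟨m, rfl⟩ := hp x y
  induction m with
  | zero => simpa using hx
  | succ k ih => rw [pow_succ', Equiv.Perm.mul_apply]; exact hS _ ih

lemma rev_pow {n : ℕ} {p : Equiv.Perm (Fin n)} {u : Fin n → Fin n}
    (hu : ∀ x, p (u (p x)) = u x) (i : ℕ) (x : Fin n) : (p ^ i) (u ((p ^ i) x)) = u x := by
  induction i generalizing x with
  | zero => simp
  | succ k ih =>
    rw [pow_succ', Equiv.Perm.mul_apply, Equiv.Perm.mul_apply]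
    have h1 : p ((p ^ k) x) = (p ^ k) (p x) := by
      rw [← Equiv.Perm.mul_apply, ← Equiv.Perm.mul_apply, (Commute.self_pow p k).eq]
    rw [h1, ih, hu]

lemma pow_iff {n : ℕ} (p : Equiv.Perm (Fin n)) (x : Fin n) (i : ℕ) :
    (p ^ i) x = x ↔ Function.minimalPeriod p x ∣ i := by
  rw [← Function.isPeriodicPt_iff_minimalPeriod_dvd, Function.IsPeriodicPt, Function.IsFixedPt,
    Equiv.Perm.iterate_eq_pow]

lemma no_three {n : ℕ} {p : Equiv.Perm (Fin n)} (hp : IsCyclicPerm p) {u : Fin n → Fin n}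
    (hu : ∀ x, p (u (p x)) = u x) {x y z : Fin n} (hx : u x = x) (hy : u y = y) (hz : u z = z)
    (hxy : x ≠ y) (hxz : x ≠ z) (hyz : y ≠ z) : False := by
  obtain ⟨i, rfl⟩ := hp x y
  obtain ⟨j, rfl⟩ := hp x z
  have h1 := rev_pow hu i x
  have h2 := rev_pow hu j x
  rw [hy, hx, ← Equiv.Perm.mul_apply, ← pow_add] at h1
  rw [hz, hx, ← Equiv.Perm.mul_apply, ← pow_add] at h2
  have e1 := (pow_iff p x _).1 h1
  have e2 := (pow_iff p x _).1 h2
  have n1 : ¬ Function.minimalPeriod p x ∣ i := fun h => hxy ((pow_iff p x _).2 h).symm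
  have n2 : ¬ Function.minimalPeriod p x ∣ j := fun h => hxz ((pow_iff p x _).2 h).symm
  have e3 : Function.minimalPeriod p x ∣ i + j := by
    generalize Function.minimalPeriod p x = N at *
    obtain ⟨s, hs⟩ := e1
    obtain ⟨t, ht⟩ := e2
    rcases Nat.even_or_odd' s with ⟨s', rfl | rfl⟩
    · exact absurd ⟨s', by linarith⟩ n1
    rcases Nat.even_or_odd' t with ⟨t', rfl | rfl⟩
    · exact absurd ⟨t', by linarith⟩ n2
    exact ⟨s' + t' + 1, by linarith⟩
  have h3 := (pow_iff p x _).2 e3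
  rw [pow_add, Equiv.Perm.mul_apply] at h3
  rw [pow_add, Equiv.Perm.mul_apply] at h1
  exact hyz ((p ^ i).injective (h1.trans h3.symm))

lemma no_mixed {n : ℕ} {p : Equiv.Perm (Fin n)} (hp : IsCyclicPerm p) {u : Fin n → Fin n}
    (hu : ∀ x, p (u (p x)) = u x) {x y w : Fin n} (hx : u x = x) (hy : u y = y)
    (hw : u (p w) = w) (hxy : x ≠ y) : False := by
  obtain ⟨i, rfl⟩ := hp x y
  obtain ⟨j, rfl⟩ := hp x w
  have h1 := rev_pow hu i x
  have h2 := rev_pow hu (j + 1) x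
  rw [hy, hx, ← Equiv.Perm.mul_apply, ← pow_add] at h1
  have h4 : (p ^ (j+1)) x = p ((p ^ j) x) := by rw [pow_succ', Equiv.Perm.mul_apply]
  rw [h4, hw, hx, ← Equiv.Perm.mul_apply, ← pow_add] at h2
  have e1 := (pow_iff p x _).1 h1
  have e2 := (pow_iff p x _).1 h2
  have n1 : ¬ Function.minimalPeriod p x ∣ i := fun h => hxy ((pow_iff p x _).2 h).symm
  generalize Function.minimalPeriod p x = N at *
  have hodd : Nat.Coprime N 2 := by
    rw [Nat.coprime_two_right]
    exact Odd.of_dvd_nat ⟨j, by ring⟩ e2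
  exact n1 (hodd.dvd_of_dvd_mul_left (by rwa [two_mul]))

/-- The time-reversing involution. -/
def rev (n a : ℕ) (h : 2 * a ≤ n) (x : Fin n) : Fin n :=
  ⟨if (x : ℕ) < a then x + (n - a) else if (x : ℕ) < n - a then x else x - (n - a), by
    have := x.2
    split_ifs <;> omega⟩

lemma rev_spec {n a b : ℕ} (h : 2 * a ≤ n) (hb : 1 ≤ b) (hab : a + b < n)
    {p : Equiv.Perm (Fin n)} (hp : IsTriplePerm n a b p) (x : Fin n) :
    p (rev n a h (p x)) = rev n a h x := by
  apply Fin.ext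
  have h1 := hp (rev n a h (p x))
  have h2 := hp x
  have hx := x.2
  simp only [rev] at h1 ⊢
  rw [h1]
  clear h1
  split_ifs at h2 ⊢ <;> omega

lemma two_a_le {n a b : ℕ} (hn : 2 < n) (hab : a + b ≤ n)
    {p : Equiv.Perm (Fin n)} (hp : IsTriplePerm n a b p) (hc : IsCyclicPerm p) : 2 * a ≤ n := by
  by_contra hlt
  have key := closed_univ hc (fun x => (x : ℕ) = n - a ∨ (x : ℕ) = a - 1) (by
    intro x hx
    have h := hp x
    have := x.2
    rcases hx with hx | hx <;> (split_ifs at h <;> omega)) ⟨n - a, by omega⟩ (Or.inl rfl)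
  have k0 := key ⟨0, by omega⟩
  have k1 := key ⟨1, by omega⟩
  have k2 := key ⟨2, by omega⟩
  simp only at k0 k1 k2
  omega

lemma k_le {n a b : ℕ} (hb : 1 ≤ b) (hab : a + b < n) (h : 2 * a ≤ n)
    {p : Equiv.Perm (Fin n)} (hp : IsTriplePerm n a b p) (hc : IsCyclicPerm p) :
    n ≤ 2 * a + 2 := by
  by_contra hlt
  have fx : ∀ j : Fin n, a ≤ (j : ℕ) → (j : ℕ) < n - a → rev n a h j = j := by
    intro j h1 h2
    apply Fin.ext
    simp only [rev]
    split_ifs <;> omega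
  refine no_three hc (rev_spec h hb hab hp) (x := ⟨a, by omega⟩) (y := ⟨a + 1, by omega⟩)
    (z := ⟨a + 2, by omega⟩) (fx _ ?_ ?_) (fx _ ?_ ?_) (fx _ ?_ ?_) ?_ ?_ ?_ <;>
    simp [Fin.ext_iff] <;> omega

lemma k_two {n a b : ℕ} (hb : 1 ≤ b) (hab : a + b < n) (h : n = 2 * a + 2)
    {p : Equiv.Perm (Fin n)} (hp : IsTriplePerm n a b p) (hc : IsCyclicPerm p) :
    2 ∣ b ∧ 2 ∣ n - a := by
  by_contra hlt
  have h' : 2 * a ≤ n := by omega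
  have fx : ∀ j : Fin n, a ≤ (j : ℕ) → (j : ℕ) < n - a → rev n a h' j = j := by
    intro j h1 h2
    apply Fin.ext
    simp only [rev]
    split_ifs <;> omega
  have main : ∃ w : Fin n, rev n a h' (p w) = w := by
    by_cases hodd : 2 ∣ a
    · refine ⟨⟨a + (b + 1) / 2, by omega⟩, ?_⟩
      apply Fin.ext
      have h2 := hp ⟨a + (b + 1) / 2, by omega⟩
      simp only [rev] at h2 ⊢
      generalize (p _ : ℕ) = y at *
      split_ifs at h2 ⊢ <;> omega
    · refine ⟨⟨(a - 1) / 2, by omega⟩, ?_⟩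
      apply Fin.ext
      have h2 := hp ⟨(a - 1) / 2, by omega⟩
      simp only [rev] at h2 ⊢
      generalize (p _ : ℕ) = y at *
      split_ifs at h2 ⊢ <;> omega
  obtain ⟨w, hw⟩ := main
  refine no_mixed hc (rev_spec h' hb hab hp) (x := ⟨a, by omega⟩) (y := ⟨a + 1, by omega⟩)
    (w := w) (fx _ ?_ ?_) (fx _ ?_ ?_) hw ?_ <;>
    simp [Fin.ext_iff] <;> omega

lemma gcd_le {n a b d g : ℕ} (hb : 1 ≤ b) (hab : a + b < n) (h : 2 * a ≤ n)
    (hd : 1 ≤ d) (hk : n ≤ 2 * a + d) (hg1 : g ∣ b) (hg2 : g ∣ n - a)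
    {p : Equiv.Perm (Fin n)} (hp : IsTriplePerm n a b p) (hc : IsCyclicPerm p) :
    g ≤ d := by
  by_contra hlt
  have hgm : g ≤ n - a := Nat.le_of_dvd (by omega) hg2
  have hgc : g ∣ n - a - b := Nat.dvd_sub hg2 hg1
  have key := closed_univ hc
    (fun x => if (x : ℕ) < a then (n - 1 - x - a) % g < d else (x - a) % g < d) (by
    intro x hx
    have h1 := hp x
    have hx2 := x.2
    generalize (p x : ℕ) = y at *
    by_cases hya : y < a
    · by_cases hxa : (x : ℕ) < a
      · rw [if_pos hxa] at h1; omega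
      · rw [if_neg hxa] at h1 hx
        rw [if_pos hya]
        by_cases hxb : (x : ℕ) < a + b
        · rw [if_pos hxb] at h1
          have e : n - 1 - y - a = (x - a) + (n - a - b) := by omega
          obtain ⟨q, hq⟩ := hgc
          rw [e, hq, Nat.add_mul_mod_self_left]; exact hx
        · rw [if_neg hxb] at h1
          have e : x - a = (n - 1 - y - a) + b := by omega
          obtain ⟨q, hq⟩ := hg1
          rw [e, hq, Nat.add_mul_mod_self_left] at hx; exact hx
    · rw [if_neg hya]
      by_cases hxa : (x : ℕ) < a
      · rw [if_pos hxa] at h1 hx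
        rw [h1]; exact hx
      · by_cases hy : y < n - a
        · rw [Nat.mod_eq_of_lt (by omega)]; omega
        · exfalso
          split_ifs at h1 <;> omega) ⟨a, by omega⟩ (by simp; omega) ⟨a + d, by omega⟩
  simp only [] at key
  rw [if_neg (by omega), Nat.add_sub_cancel_left, Nat.mod_eq_of_lt (by omega)] at key
  omega

/-- Walking along a rotation of `ℤ/m`. -/
lemma walk {m c e : ℕ} (hm : 0 < m) (he : e < m) (P : ℕ → Prop) (h0 : P e)
    (hs : ∀ j, P ((e + j * c) % m) → ¬ m ∣ (j + 1) * c → P ((e + (j + 1) * c) % m))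
    (y : ℕ) (hy : y < m) (hg : (Nat.gcd c m : ℤ) ∣ (y : ℤ) - e) : P y := by
  set g := Nat.gcd c m with hgdef
  have hgpos : 0 < g := Nat.gcd_pos_of_pos_right _ hm
  obtain ⟨c', hc'⟩ : g ∣ c := Nat.gcd_dvd_left _ _
  obtain ⟨m', hm'⟩ : g ∣ m := Nat.gcd_dvd_right _ _
  have hm'pos : 0 < m' := by
    rcases Nat.eq_zero_or_pos m' with h | h
    · subst h; omega
    · exact h
  have hcop : Nat.Coprime m' c' := by
    have := Nat.coprime_div_gcd_div_gcd (m := c) (n := m) hgpos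
    rw [← hgdef, hc', hm', Nat.mul_div_cancel_left _ hgpos, Nat.mul_div_cancel_left _ hgpos] at this
    exact this.symm
  -- existence of the step count
  obtain ⟨j, hjlt, hj⟩ : ∃ j : ℕ, j < m' ∧ (e + j * c) % m = y := by
    obtain ⟨t, ht⟩ := hg
    have hbez := Nat.gcd_eq_gcd_ab c m
    have hm'z : (0 : ℤ) < m' := by exact_mod_cast hm'pos
    refine ⟨((t * Nat.gcdA c m) % m').toNat, ?_, ?_⟩
    · have := Int.emod_lt_of_pos (t * Nat.gcdA c m) hm'z
      have := Int.emod_nonneg (t * Nat.gcdA c m) hm'z.ne'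
      omega
    · have hnn := Int.emod_nonneg (t * Nat.gcdA c m) hm'z.ne'
      have hdm := Int.emod_add_mul_ediv (t * Nat.gcdA c m) m'
      have : ((e + ((t * Nat.gcdA c m) % m').toNat * c : ℕ) : ℤ) ≡ (y : ℕ) [ZMOD m] := by
        push_cast
        rw [Int.toNat_of_nonneg hnn]
        apply Int.ModEq.symm
        rw [Int.modEq_iff_dvd]
        have hX : t * Nat.gcdA c m % m' = t * Nat.gcdA c m - m' * (t * Nat.gcdA c m / m') := by
          linarith
        rw [hX]
        generalize t * Nat.gcdA c m / m' = q
        have hcz : (c : ℤ) = g * c' := by exact_mod_cast hc'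
        have hmz : (m : ℤ) = g * m' := by exact_mod_cast hm'
        rw [← hgdef] at hbez
        refine ⟨- t * Nat.gcdB c m - q * c', ?_⟩
        have : (e : ℤ) - y = - (g * t) := by linarith
        have e2 : (m' : ℤ) * q * c = m * (q * c') := by rw [hcz, hmz]; ring
        have e3 : (g : ℤ) * t = c * Nat.gcdA c m * t + m * Nat.gcdB c m * t := by
          rw [hbez]; ring
        linear_combination this - e2 - e3
      have := (Int.natCast_modEq_iff.1 this)
      rw [Nat.ModEq, Nat.mod_eq_of_lt hy] at this
      exact this
  have ind : ∀ i, i < m' → P ((e + i * c) % m) := by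
    intro i
    induction i with
    | zero => intro _; simpa [Nat.mod_eq_of_lt he] using h0
    | succ i ih =>
      intro hi
      apply hs i (ih (by omega))
      intro hdvd
      rw [hc', hm', mul_left_comm] at hdvd
      have := hcop.dvd_of_dvd_mul_right (Nat.dvd_of_mul_dvd_mul_left hgpos hdvd)
      have := Nat.le_of_dvd (by omega) this
      omega
  rw [← hj]
  exact ind j hjlt

lemma step {n a b : ℕ} (hb : 1 ≤ b) (hab : a + b < n) (h : 2 * a ≤ n)
    {p : Equiv.Perm (Fin n)} (hp : IsTriplePerm n a b p) (t t' : ℕ) (ht : a + t < n)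
    (ht' : a + t' < n)
    (htt : t' = if t < b then t + (n - a - b) else t - b)
    (hk : n ≤ 2 * a + t' ∨ n = 2 * a + 1) :
    p.SameCycle ⟨a + t, ht⟩ ⟨a + t', ht'⟩ := by
  by_cases hc : n ≤ 2 * a + t'
  · refine ⟨2, ?_⟩
    have e : p ⟨a + t, ht⟩ = ⟨n - 1 - (a + t'), by omega⟩ := by
      apply Fin.ext
      rw [hp]
      simp only
      split_ifs at htt ⊢ <;> omega
    have e2 : p ⟨n - 1 - (a + t'), by omega⟩ = ⟨a + t', ht'⟩ := by
      apply Fin.ext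
      rw [hp]
      simp only
      split_ifs at htt ⊢ <;> omega
    have : (p ^ (2 : ℤ)) ⟨a + t, ht⟩ = p (p ⟨a + t, ht⟩) := by
      rw [zpow_two, Equiv.Perm.mul_apply]
    rw [this, e, e2]
  · refine ⟨1, ?_⟩
    rw [zpow_one]
    apply Fin.ext
    rw [hp]
    simp only
    split_ifs at htt ⊢ <;> omega

lemma next_mod {m c e j t : ℕ} (hcm : c ≤ m) (hm : 0 < m) (ht : (e + j * c) % m = t) :
    (e + (j + 1) * c) % m = if t < m - c then t + c else t - (m - c) := by
  have hlt := Nat.mod_lt (e + j * c) hm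
  have e1 : e + (j + 1) * c = e + j * c + c := by ring
  rw [e1, Nat.add_mod, ht]
  rw [ht] at hlt
  rcases hcm.eq_or_lt with rfl | hc
  · simp [Nat.mod_eq_of_lt hlt]
  rw [Nat.mod_eq_of_lt hc]
  split_ifs
  · rw [Nat.mod_eq_of_lt (by omega)]
  · rw [Nat.mod_eq_sub_mod (by omega), Nat.mod_eq_of_lt (by omega)]
    omega

lemma cyclic_of_hub {n a b : ℕ} (h : 2 * a ≤ n) (han : a < n)
    {p : Equiv.Perm (Fin n)} (hp : IsTriplePerm n a b p)
    (hub : ∀ t, ∀ ht : a + t < n, p.SameCycle ⟨a, han⟩ ⟨a + t, ht⟩) : IsCyclicPerm p := by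
  have all : ∀ x, p.SameCycle ⟨a, han⟩ x := by
    intro x
    by_cases hx : (x : ℕ) < a
    · have e : p x = ⟨a + (n - 1 - x - a), by omega⟩ := by
        apply Fin.ext
        rw [hp, if_pos hx]
        simp only
        omega
      have := hub (n - 1 - x - a) (by omega)
      rw [← e] at this
      exact Equiv.Perm.sameCycle_apply_right.1 this
    · have := hub (x - a) (by omega)
      have e : (⟨a + (x - a), by omega⟩ : Fin n) = x := by
        apply Fin.ext
        simp only
        omega
      rw [e] at this
      exact this
  intro x y
  obtain ⟨i, -, hi⟩ := ((all x).symm.trans (all y)).exists_pow_eq'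
  exact ⟨i, hi⟩

lemma gcd_c {m b : ℕ} (h : b ≤ m) : Nat.gcd (m - b) m = Nat.gcd b m := by
  obtain ⟨d, rfl⟩ := Nat.exists_eq_add_of_le h
  rw [Nat.add_sub_cancel_left, Nat.gcd_add_self_right, Nat.gcd_self_add_right, Nat.gcd_comm]

lemma suff_one {n a b : ℕ} (hb : 1 ≤ b) (hab : a + b < n) (h : 2 * a ≤ n) (hk : n ≤ 2 * a + 1)
    (hg : Nat.gcd b (n - a) = 1)
    {p : Equiv.Perm (Fin n)} (hp : IsTriplePerm n a b p) : IsCyclicPerm p := by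
  refine cyclic_of_hub h (by omega) hp ?_
  intro t ht
  have hg' : Nat.gcd (n - a - b) (n - a) = 1 := by rw [gcd_c (by omega), hg]
  refine walk (m := n - a) (c := n - a - b) (e := 0) (by omega) (by omega)
    (fun t => ∀ ht : a + t < n, p.SameCycle ⟨a, by omega⟩ ⟨a + t, ht⟩)
    (fun _ => Equiv.Perm.SameCycle.refl _ _) ?_ t (by omega) ?_ ht
  · intro j hj _ ht'
    have hlt := Nat.mod_lt (0 + j * (n - a - b)) (show 0 < n - a by omega)
    have hn := next_mod (m := n - a) (c := n - a - b) (e := 0) (j := j) (by omega) (by omega) rfl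
    rw [show n - a - (n - a - b) = b by omega] at hn
    exact (hj (by omega)).trans (step hb hab h hp _ _ (by omega) ht' hn (by omega))
  · rw [hg']; simp

lemma suff_two {n a b : ℕ} (hb : 1 ≤ b) (hab : a + b < n) (h : n = 2 * a + 2)
    (hg : Nat.gcd b (n - a) = 2)
    {p : Equiv.Perm (Fin n)} (hp : IsTriplePerm n a b p) : IsCyclicPerm p := by
  have hg' : Nat.gcd (n - a - b) (n - a) = 2 := by rw [gcd_c (by omega), hg]
  have d1 : 2 ∣ b := hg ▸ Nat.gcd_dvd_left b (n - a)
  have d2 : 2 ∣ n - a := hg ▸ Nat.gcd_dvd_right b (n - a)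
  have key : ∀ e, ∀ he : e < 2, ∀ t, ∀ ht : a + t < n, t % 2 = e →
      p.SameCycle ⟨a + e, by omega⟩ ⟨a + t, ht⟩ := by
    intro e he t ht hte
    refine walk (m := n - a) (c := n - a - b) (e := e) (by omega) (by omega)
      (fun t => ∀ ht : a + t < n, p.SameCycle ⟨a + e, by omega⟩ ⟨a + t, ht⟩)
      (fun _ => Equiv.Perm.SameCycle.refl _ _) ?_ t (by omega) ?_ ht
    · intro j hj hnd ht'
      have hlt := Nat.mod_lt (e + j * (n - a - b)) (show 0 < n - a by omega)
      have hn := next_mod (m := n - a) (c := n - a - b) (e := e) (j := j)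
        (by omega) (by omega) rfl
      rw [show n - a - (n - a - b) = b by omega] at hn
      refine (hj (by omega)).trans (step hb hab (by omega) hp _ _ (by omega) ht' hn (Or.inl ?_))
      by_contra hcon
      apply hnd
      have hdc : 2 ∣ (j + 1) * (n - a - b) := Dvd.dvd.mul_left (by omega) _
      have hdm := Nat.div_add_mod (e + (j + 1) * (n - a - b)) (n - a)
      have hdd : 2 ∣ (n - a) * ((e + (j + 1) * (n - a - b)) / (n - a)) := Dvd.dvd.mul_right d2 _
      refine ⟨(e + (j + 1) * (n - a - b)) / (n - a), ?_⟩
      generalize (n - a) * ((e + (j + 1) * (n - a - b)) / (n - a)) = A at *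
      generalize (e + (j + 1) * (n - a - b)) % (n - a) = B at *
      generalize (j + 1) * (n - a - b) = C at *
      omega
    · rw [hg']; push_cast; omega
  have link : p ⟨a + b, hab⟩ = ⟨a + 1, by omega⟩ := by
    apply Fin.ext
    rw [hp]
    simp only
    split_ifs <;> omega
  refine cyclic_of_hub (by omega) (by omega) hp ?_
  intro t ht
  rcases Nat.mod_two_eq_zero_or_one t with h0 | h1
  · exact key 0 (by omega) t ht h0
  · have k1 := key 0 (by omega) b hab (by omega)
    have k2 := key 1 (by omega) t ht h1
    rw [← link] at k2
    exact k1.trans ((Equiv.Perm.sameCycle_apply_right.2 (Equiv.Perm.SameCycle.refl _ _)).trans k2)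

lemma cyclic_iff {n a b : ℕ} (hn : 2 < n) (hb : 1 ≤ b) (hab : a + b < n)
    {p : Equiv.Perm (Fin n)} (hp : IsTriplePerm n a b p) :
    IsCyclicPerm p ↔ ((n = 2 * a ∨ n = 2 * a + 1) ∧ Nat.gcd b (n - a) = 1) ∨
      (n = 2 * a + 2 ∧ Nat.gcd b (n - a) = 2) := by
  constructor
  · intro hc
    have h1 := two_a_le hn hab.le hp hc
    have h2 := k_le hb hab h1 hp hc
    have hpos : 0 < Nat.gcd b (n - a) := Nat.gcd_pos_of_pos_left _ hb
    by_cases h3 : n = 2 * a + 2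
    · right
      refine ⟨h3, ?_⟩
      obtain ⟨d1, d2⟩ := k_two hb hab h3 hp hc
      have := gcd_le hb hab h1 (d := 2) (by omega) (by omega) (Nat.gcd_dvd_left b (n - a))
        (Nat.gcd_dvd_right b (n - a)) hp hc
      have := Nat.le_of_dvd hpos (Nat.dvd_gcd d1 d2)
      omega
    · left
      refine ⟨by omega, ?_⟩
      have := gcd_le hb hab h1 (d := 1) (by omega) (by omega) (Nat.gcd_dvd_left b (n - a))
        (Nat.gcd_dvd_right b (n - a)) hp hc
      omega
  · rintro (⟨h1, h2⟩ | ⟨h1, h2⟩)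
    · exact suff_one hb hab (by omega) (by omega) h2 hp
    · exact suff_two hb hab h1 h2 hp

lemma exists_triple {n a b : ℕ} (hab : a + b ≤ n) :
    ∃ p : Equiv.Perm (Fin n), IsTriplePerm n a b p := by
  let f : Fin n → Fin n := fun i =>
    ⟨if (i : ℕ) < a then n - 1 - (i : ℕ)
      else if (i : ℕ) < a + b then a + b - 1 - (i : ℕ)
      else n + b - 1 - (i : ℕ), by have := i.2; split_ifs <;> omega⟩
  have hf : Function.Injective f := by
    intro i j hij
    have := Fin.ext_iff.1 hij
    apply Fin.ext
    simp only [f] at this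
    have := i.2
    have := j.2
    split_ifs at * <;> omega
  exact ⟨Equiv.ofBijective f (Finite.injective_iff_bijective.1 hf), fun i => rfl⟩

lemma triple_lt {n a b : ℕ} (hab : a + b ≤ n)
    {p : Equiv.Perm (Fin n)} (hp : IsTriplePerm n a b p) {i k : Fin n} (hik : i < k) :
    p i < p k ↔ a ≤ (i : ℕ) ∧ (i : ℕ) < a + b ∧ a + b ≤ (k : ℕ) := by
  rw [Fin.lt_def, hp, hp]
  rw [Fin.lt_def] at hik
  have := k.2
  split_ifs <;> omega

lemma triple_unique {n a b : ℕ} {p q : Equiv.Perm (Fin n)} (hp : IsTriplePerm n a b p)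
    (hq : IsTriplePerm n a b q) : p = q := by
  ext i
  rw [hp, hq]

lemma triple_inj {n a b a' b' : ℕ} (hb : 1 ≤ b) (hab : a + b < n) (hb' : 1 ≤ b')
    (hab' : a' + b' < n) {p : Equiv.Perm (Fin n)} (hp : IsTriplePerm n a b p)
    (hq : IsTriplePerm n a' b' p) : a = a' ∧ b = b' := by
  have h1 := hp ⟨a, by omega⟩
  have h2 := hq ⟨a, by omega⟩
  have h3 := hp ⟨a', by omega⟩
  have h4 := hq ⟨a', by omega⟩
  rw [h1] at h2
  rw [h3] at h4
  simp only at h2 h4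
  split_ifs at h2 h4 <;> omega

lemma eq_of_order {n : ℕ} {p q : Equiv.Perm (Fin n)}
    (h : ∀ i k, i < k → (p i < p k ↔ q i < q k)) : p = q := by
  have h' : ∀ i k, p i < p k ↔ q i < q k := by
    intro i k
    rcases lt_trichotomy i k with hik | rfl | hik
    · exact h i k hik
    · simp
    · have := h k i hik
      have n1 : p i ≠ p k := fun e => hik.ne' (p.injective e)
      have n2 : q i ≠ q k := fun e => hik.ne' (q.injective e)
      constructor
      · intro hh
        by_contra hc
        exact absurd (this.2 (lt_of_le_of_ne (not_lt.1 hc) n2.symm)) (not_lt.2 hh.le)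
      · intro hh
        by_contra hc
        exact absurd (this.1 (lt_of_le_of_ne (not_lt.1 hc) n1.symm)) (not_lt.2 hh.le)
  let e : Fin n ≃o Fin n := 
    { toEquiv := p.symm.trans q
      map_rel_iff' := by
        intro x y
        rw [← not_lt, ← not_lt]
        simp only [Equiv.trans_apply]
        rw [← h']
        simp }
  have he : e = OrderIso.refl _ := Subsingleton.elim _ _
  ext i
  have := congrArg (fun f : Fin n ≃o Fin n => f (p i)) he
  simp [e] at this
  rw [this]

lemma contains123 {n : ℕ} {p : Equiv.Perm (Fin n)} :
    Contains p pat123 ↔ ∃ i j k, i < j ∧ j < k ∧ p i < p j ∧ p j < p k := by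
  constructor
  · rintro ⟨f, hf, h⟩
    exact ⟨f 0, f 1, f 2, hf (by decide), hf (by decide), (h 0 1).1 (by decide),
      (h 1 2).1 (by decide)⟩
  · rintro ⟨i, j, k, h1, h2, h3, h4⟩
    refine ⟨![i, j, k], ?_, ?_⟩
    · intro x y hxy
      fin_cases x <;> fin_cases y <;> simp at hxy ⊢ <;> first | assumption | exact h1.trans h2
    · intro x y
      have := h3.trans h4
      fin_cases x <;> fin_cases y <;> simp [pat123, *] <;> exact le_of_lt (by assumption)

lemma contains231 {n : ℕ} {p : Equiv.Perm (Fin n)} :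
    Contains p pat231 ↔ ∃ i j k, i < j ∧ j < k ∧ p i < p j ∧ p k < p i := by
  constructor
  · rintro ⟨f, hf, h⟩
    exact ⟨f 0, f 1, f 2, hf (by decide), hf (by decide), (h 0 1).1 (by decide),
      (h 2 0).1 (by decide)⟩
  · rintro ⟨i, j, k, h1, h2, h3, h4⟩
    refine ⟨![i, j, k], ?_, ?_⟩
    · intro x y hxy
      fin_cases x <;> fin_cases y <;> simp at hxy ⊢ <;> first | assumption | exact h1.trans h2
    · intro x y
      have := h4.trans h3
      fin_cases x <;> fin_cases y <;> simp [pat231, *] <;> exact le_of_lt (by assumption)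

lemma triple_avoids {n a b : ℕ} (hab : a + b ≤ n)
    {p : Equiv.Perm (Fin n)} (hp : IsTriplePerm n a b p) :
    Avoids p pat123 ∧ Avoids p pat231 := by
  constructor
  · rw [Avoids, contains123]
    rintro ⟨i, j, k, h1, h2, h3, h4⟩
    rw [triple_lt hab hp h1] at h3
    rw [triple_lt hab hp h2] at h4
    omega
  · rw [Avoids, contains231]
    rintro ⟨i, j, k, h1, h2, h3, h4⟩
    have h5 := (triple_lt hab hp h1).1 h3
    have h6 := mt (triple_lt hab hp (h1.trans h2)).2 (not_lt.2 h4.le)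
    rw [Fin.lt_def] at h1 h2
    omega

lemma classify {n : ℕ} (hn : 2 < n) {p : Equiv.Perm (Fin n)} (hc : IsCyclicPerm p)
    (h1 : Avoids p pat123) (h2 : Avoids p pat231) :
    ∃ a b, 1 ≤ b ∧ a + b < n ∧ IsTriplePerm n a b p := by
  rw [Avoids, contains123] at h1
  rw [Avoids, contains231] at h2
  obtain ⟨z, hz⟩ : ∃ z, p z = ⟨0, by omega⟩ := p.surjective _
  have hz0 : ∀ i, i ≠ z → p z < p i := by
    intro i hi
    have : p i ≠ p z := fun e => hi (p.injective e)
    rw [hz] at this ⊢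
    rw [Fin.lt_def]
    have := Fin.val_ne_of_ne this
    simp only at this ⊢
    omega
  have lt_of_not : ∀ i k, i ≠ k → ¬ p i < p k → p k < p i := by
    intro i k hik hh
    exact lt_of_le_of_ne (not_lt.1 hh) (fun e => hik (p.injective e).symm)
  have D1 : ∀ i k, i < k → k ≤ z → ¬ p i < p k := by
    intro i k hik hkz hh
    rcases hkz.eq_or_lt with rfl | hkz
    · exact absurd (hz0 i hik.ne) (not_lt.2 hh.le)
    · exact h2 ⟨i, k, z, hik, hkz, hh, hz0 i (hik.trans hkz).ne⟩
  have D2 : ∀ i k, i < k → z < i → ¬ p i < p k := by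
    intro i k hik hzi hh
    exact h1 ⟨z, i, k, hzi, hik, hz0 i hzi.ne', hh⟩
  let L : Fin n := ⟨n - 1, by omega⟩
  have hL : ∀ i, i ≤ L := by
    intro i
    rw [Fin.le_def]
    have := i.2
    simp only [L]
    omega
  by_cases hzL : z = L
  · exfalso
    obtain ⟨q, hq⟩ := exists_triple (n := n) (a := n) (b := 0) (by omega)
    have : p = q := by
      apply eq_of_order
      intro i k hik
      rw [triple_lt (by omega) hq hik]
      have := D1 i k hik (hzL ▸ hL k)
      have := k.2
      constructor
      · intro; contradiction
      · intro; omega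
    subst this
    have := two_a_le hn (by omega) hq hc
    omega
  have hzL' : z < L := lt_of_le_of_ne (hL z) hzL
  have hex : ∃ t : ℕ, ∃ ht : t < n, p ⟨t, ht⟩ < p L := ⟨z, z.2, hz0 L (Ne.symm hzL)⟩
  classical
  let a := Nat.find hex
  obtain ⟨han, haL⟩ := Nat.find_spec hex
  have hamin : ∀ i : Fin n, (i : ℕ) < a → ¬ p i < p L := by
    intro i hi hh
    exact Nat.find_min hex hi ⟨i.2, hh⟩
  have haz : a ≤ z := Nat.find_min' hex ⟨z.2, hz0 L (Ne.symm hzL)⟩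
  have hzn : (z : ℕ) < n - 1 := hzL'
  change a < n at han
  change p ⟨a, han⟩ < p L at haL
  refine ⟨a, z + 1 - a, by omega, by omega, ?_⟩
  obtain ⟨q, hq⟩ := exists_triple (n := n) (a := a) (b := z + 1 - a) (by omega)
  have : p = q := by
    apply eq_of_order
    intro i k hik
    rw [triple_lt (by omega) hq hik]
    constructor
    · intro hh
      have c1 : z < k := by
        by_contra hcon
        exact D1 i k hik (not_lt.1 hcon) hh
      have c2 : i ≤ z := by
        by_contra hcon
        exact D2 i k hik (not_le.1 hcon) hh
      have c3 : a ≤ i := by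
        by_contra hcon
        have := hamin i (not_le.1 hcon)
        have hiL : i < L := lt_of_le_of_lt c2 hzL'
        have hlt := lt_of_not i L hiL.ne this
        have hkL : k < L := by
          rcases (hL k).eq_or_lt with rfl | h
          · exact absurd hh this
          · exact h
        exact h2 ⟨i, k, L, hik, hkL, hh, hlt⟩
      rw [Fin.lt_def] at c1
      rw [Fin.le_def] at c2
      omega
    · rintro ⟨c1, c2, c3⟩
      have e1 : p i ≤ p ⟨a, han⟩ := by
        rcases c1.eq_or_lt with h | h
        · have : i = ⟨a, han⟩ := Fin.ext h.symm
          rw [this]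
        · exact not_lt.1 (D1 ⟨a, han⟩ i h (by rw [Fin.le_def]; omega))
      have e2 : p L ≤ p k := by
        rcases (hL k).eq_or_lt with h | h
        · rw [h]
        · exact not_lt.1 (D2 k L h (by rw [Fin.lt_def]; omega))
      exact lt_of_le_of_lt e1 (lt_of_lt_of_le haL e2)
  rw [this]
  exact hq

/-- The index set of pairs. -/
def good (n : ℕ) (t : ℕ × ℕ) : Prop :=
  1 ≤ t.2 ∧ t.1 + t.2 < n ∧
    (((n = 2 * t.1 ∨ n = 2 * t.1 + 1) ∧ Nat.gcd t.2 (n - t.1) = 1) ∨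
      (n = 2 * t.1 + 2 ∧ Nat.gcd t.2 (n - t.1) = 2))

lemma card_eq {n : ℕ} (hn : 2 < n) (T : Finset (ℕ × ℕ)) (hT : ∀ t, t ∈ T ↔ good n t) :
    Nat.card {p : Equiv.Perm (Fin n) //
        IsCyclicPerm p ∧ Avoids p pat123 ∧ Avoids p pat231} = T.card := by
  classical
  rw [Nat.card_eq_fintype_card, Fintype.card_subtype]
  symm
  have hex : ∀ t ∈ T, ∃ p : Equiv.Perm (Fin n), IsTriplePerm n t.1 t.2 p := fun t ht =>
    exists_triple ((hT t).1 ht).2.1.le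
  choose f hf using hex
  refine Finset.card_bij f ?_ ?_ ?_
  · intro t ht
    obtain ⟨g1, g2, g3⟩ := (hT t).1 ht
    simp only [Finset.mem_filter, Finset.mem_univ, true_and]
    exact ⟨(cyclic_iff hn g1 g2 (hf t ht)).2 g3, triple_avoids g2.le (hf t ht)⟩
  · intro t ht t' ht' he
    obtain ⟨g1, g2, -⟩ := (hT t).1 ht
    obtain ⟨g1', g2', -⟩ := (hT t').1 ht'
    have := hf t' ht'
    rw [← he] at this
    have := triple_inj g1 g2 g1' g2' (hf t ht) this
    exact Prod.ext this.1 this.2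
  · intro p hp
    simp only [Finset.mem_filter, Finset.mem_univ, true_and] at hp
    obtain ⟨hc, h1, h2⟩ := hp
    obtain ⟨a, b, g1, g2, hab⟩ := classify hn hc h1 h2
    have ht : (a, b) ∈ T := (hT _).2 ⟨g1, g2, (cyclic_iff hn g1 g2 hab).1 hc⟩
    exact ⟨(a, b), ht, triple_unique (hf _ ht) hab⟩

/-- residues with a given gcd -/
def B (m d : ℕ) : Finset ℕ := {k ∈ Finset.range m | m.gcd k = d}

lemma mem_B {m d k : ℕ} (hm : d < m) : k ∈ B m d ↔ 1 ≤ k ∧ k < m ∧ Nat.gcd k m = d := by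
  simp only [B, Finset.mem_filter, Finset.mem_range]
  rw [Nat.gcd_comm]
  constructor
  · rintro ⟨h1, h2⟩
    refine ⟨?_, h1, h2⟩
    rcases Nat.eq_zero_or_pos k with rfl | h
    · rw [Nat.gcd_zero_left] at h2; omega
    · exact h
  · rintro ⟨_, h1, h2⟩
    exact ⟨h1, h2⟩

lemma card_B {m d : ℕ} (h : d ∣ m) : (B m d).card = Nat.totient (m / d) :=
  (Nat.totient_div_of_dvd h).symm

end Cyc

open Cyc in
theorem stmt14 (n : ℕ) (hn : 2 < n) :
    (n % 4 = 0 → Nat.card {p : Equiv.Perm (Fin n) //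
        IsCyclicPerm p ∧ Avoids p pat123 ∧ Avoids p pat231} = Nat.totient (n / 2)) ∧
    (n % 4 = 2 → Nat.card {p : Equiv.Perm (Fin n) //
        IsCyclicPerm p ∧ Avoids p pat123 ∧ Avoids p pat231} =
          Nat.totient ((n + 2) / 4) + Nat.totient (n / 2)) ∧
    (Odd n → Nat.card {p : Equiv.Perm (Fin n) //
        IsCyclicPerm p ∧ Avoids p pat123 ∧ Avoids p pat231} =
          Nat.totient ((n + 1) / 2)) := by
  refine ⟨?_, ?_, ?_⟩
  · intro h4
    rw [card_eq hn ({n / 2} ×ˢ B (n / 2) 1), Finset.card_product, card_B (one_dvd _)]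
    · simp
    · rintro ⟨a, b⟩
      rw [Finset.mem_product, Finset.mem_singleton, mem_B (by omega), good]
      simp only
      constructor
      · rintro ⟨rfl, h1, h2, h3⟩
        refine ⟨h1, by omega, Or.inl ⟨Or.inl (by omega), ?_⟩⟩
        rwa [show n - n / 2 = n / 2 by omega]
      · rintro ⟨h1, h2, (⟨h3, h5⟩ | ⟨h3, h5⟩)⟩
        · have : a = n / 2 := by omega
          rw [show n - a = n / 2 by omega] at h5
          exact ⟨this, h1, by omega, h5⟩
        · have : 2 ∣ n - a := h5 ▸ Nat.gcd_dvd_right b (n - a)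
          omega
  · intro h4
    rw [card_eq hn ({n / 2 - 1} ×ˢ B (n / 2 + 1) 2 ∪ {n / 2} ×ˢ B (n / 2) 1),
      Finset.card_union_of_disjoint, Finset.card_product, Finset.card_product,
      card_B (one_dvd _), card_B (by omega)]
    · simp only [Finset.card_singleton, one_mul, Nat.div_one]
      rw [show (n / 2 + 1) / 2 = (n + 2) / 4 by omega]
    · rw [Finset.disjoint_left]
      rintro ⟨a, b⟩ h1 h2
      rw [Finset.mem_product, Finset.mem_singleton] at h1 h2
      simp only at h1 h2
      omega
    · rintro ⟨a, b⟩
      rw [Finset.mem_union, Finset.mem_product, Finset.mem_singleton, mem_B (by omega),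
        Finset.mem_product, Finset.mem_singleton, mem_B (by omega), good]
      simp only
      constructor
      · rintro (⟨rfl, h1, h2, h3⟩ | ⟨rfl, h1, h2, h3⟩)
        · refine ⟨h1, by omega, Or.inr ⟨by omega, ?_⟩⟩
          rwa [show n - (n / 2 - 1) = n / 2 + 1 by omega]
        · refine ⟨h1, by omega, Or.inl ⟨Or.inl (by omega), ?_⟩⟩
          rwa [show n - n / 2 = n / 2 by omega]
      · rintro ⟨h1, h2, (⟨h3, h5⟩ | ⟨h3, h5⟩)⟩
        · have : a = n / 2 := by omega
          rw [show n - a = n / 2 by omega] at h5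
          exact Or.inr ⟨this, h1, by omega, h5⟩
        · have : a = n / 2 - 1 := by omega
          rw [show n - a = n / 2 + 1 by omega] at h5
          exact Or.inl ⟨this, h1, by omega, h5⟩
  · rintro ⟨r, hr⟩
    rw [card_eq hn ({n / 2} ×ˢ B ((n + 1) / 2) 1), Finset.card_product, card_B (one_dvd _)]
    · simp
    · rintro ⟨a, b⟩
      rw [Finset.mem_product, Finset.mem_singleton, mem_B (by omega), good]
      simp only
      constructor
      · rintro ⟨rfl, h1, h2, h3⟩
        refine ⟨h1, by omega, Or.inl ⟨Or.inr (by omega), ?_⟩⟩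
        rwa [show n - n / 2 = (n + 1) / 2 by omega]
      · rintro ⟨h1, h2, (⟨h3, h5⟩ | ⟨h3, h5⟩)⟩
        · have : a = n / 2 := by omega
          rw [show n - a = (n + 1) / 2 by omega] at h5
          exact ⟨this, h1, by omega, h5⟩
        · omega
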